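/- Let P ⊆ ℤ^n_{≥0} be a polymatroid over [n]. Then the sequence of coefficients [y^0]X_P(y), [y^1]X_P(y), …, [y^{r_2(P)−1}]X_P(y) of the exterior polynomial is unimodal: there exists an index k such that [y^i]X_P(y) ≤ [y^{i+1}]X_P(y) for all i < k with i+1 ≤ r_2(P)−1, and [y^i]X_P(y) ≥ [y^{i+1}]X_P(y) for all i > k with i+1 ≤ r_2(P)−1. -/

import Mathlib

open Finset Polynomial

/-- `f` is the rank function of a polymatroid over the ground set `[n]` (encoded as `Fin n`):
normalization, monotonicity and submodularity. -/
def IsPolymatroidRank (n : ℕ) (f : Finset (Fin n) → ℕ) : Prop :=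
  f ∅ = 0 ∧ (∀ I J : Finset (Fin n), I ⊆ J → f I ≤ f J) ∧
    ∀ I J : Finset (Fin n), f (I ∪ J) + f (I ∩ J) ≤ f I + f J

/-- The set of bases of the polymatroid `P ⊆ ℤ^n_{≥0}` with rank function `f`:
all nonnegative integer vectors `a` with `∑_{i ∈ I} a i ≤ f I` for every `I ⊆ [n]`
and `∑_{i ∈ [n]} a i = f [n]`.  (Every such vector has entries `≤ f [n]`, whence the
bounding box used to produce a `Finset`.) -/
def polyBases (n : ℕ) (f : Finset (Fin n) → ℕ) : Finset (Fin n → ℤ) :=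
  ((Finset.univ : Finset (Fin n → Fin (f Finset.univ + 1))).image
      (fun a i => ((a i : ℕ) : ℤ))).filter
    fun a => (∀ i, 0 ≤ a i) ∧ (∀ I : Finset (Fin n), ∑ i ∈ I, a i ≤ (f I : ℤ)) ∧
      ∑ i, a i = (f Finset.univ : ℤ)

/-- The externally active indices of a basis `a`: those `i` such that
`a + e_i - e_j ∉ P` for every `j < i`. -/
def extAct (n : ℕ) (f : Finset (Fin n) → ℕ) (a : Fin n → ℤ) : Finset (Fin n) :=
  Finset.univ.filter fun i => ∀ j, j < i →
    (fun t => a t + (if t = i then 1 else 0) - (if t = j then 1 else 0)) ∉ polyBases n f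

/-- The internally active indices of a basis `a`: those `i` such that
`a - e_i + e_j ∉ P` for every `j < i`. -/
def intAct (n : ℕ) (f : Finset (Fin n) → ℕ) (a : Fin n → ℤ) : Finset (Fin n) :=
  Finset.univ.filter fun i => ∀ j, j < i →
    (fun t => a t - (if t = i then 1 else 0) + (if t = j then 1 else 0)) ∉ polyBases n f

/-- The exterior polynomial `X_P(y) = ∑_{a ∈ P} y^(n - |Ext(a)|)`. -/
noncomputable def exteriorPoly (n : ℕ) (f : Finset (Fin n) → ℕ) : Polynomial ℤ :=
  ∑ a ∈ polyBases n f, X ^ (n - (extAct n f a).card)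

/-- The interior polynomial `I_P(x) = ∑_{a ∈ P} x^(n - |Int(a)|)`. -/
noncomputable def interiorPoly (n : ℕ) (f : Finset (Fin n) → ℕ) : Polynomial ℤ :=
  ∑ a ∈ polyBases n f, X ^ (n - (intAct n f a).card)

/-- `r_k(P) = min { n - |F| : F ⊆ [n], f F ≤ f [n] - k }` (junk value `0` if no such `F`). -/
noncomputable def rk (n : ℕ) (f : Finset (Fin n) → ℕ) (k : ℕ) : ℕ :=
  sInf {m | ∃ F : Finset (Fin n), (f F : ℤ) ≤ (f Finset.univ : ℤ) - k ∧ m = n - F.card}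

/-- `r'_k(P) = min { |F| : F ⊆ [n], ∑_{i ∈ F} f {i} - f F ≥ k }` (junk value `0` if no such `F`). -/
noncomputable def rk' (n : ℕ) (f : Finset (Fin n) → ℕ) (k : ℕ) : ℕ :=
  sInf {m | ∃ F : Finset (Fin n), (k : ℤ) ≤ (∑ i ∈ F, (f {i} : ℤ)) - (f F : ℤ) ∧ m = F.card}

/-- `H_j(P)`: the flats `H` (i.e. `f (H ∪ {e}) > f H` for all `e ∉ H`) with
`f H = f [n] - 1` and `n - |H| = j`. -/
def Hset (n : ℕ) (f : Finset (Fin n) → ℕ) (j : ℕ) : Finset (Finset (Fin n)) :=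
  Finset.univ.filter fun H =>
    (∀ e, e ∉ H → f H < f (insert e H)) ∧ (f H : ℤ) = (f Finset.univ : ℤ) - 1 ∧
      n - H.card = j

/-- `C_j(P)`: the sets `C` with `|C| = j`, `∑_{i ∈ C} f {i} - f C = 1` and
`∑_{i ∈ C \ {j'}} f {i} = f (C \ {j'})` for every `j' ∈ C`. -/
def Cset (n : ℕ) (f : Finset (Fin n) → ℕ) (j : ℕ) : Finset (Finset (Fin n)) :=
  Finset.univ.filter fun C => C.card = j ∧
    (∑ i ∈ C, (f {i} : ℤ)) - (f C : ℤ) = 1 ∧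
    ∀ j' ∈ C, (∑ i ∈ C.erase j', (f {i} : ℤ)) = (f (C.erase j') : ℤ)

/-- The dual rank function `f*(I) = f([n] \ I) - f([n]) + ∑_{i ∈ I} f {i}`
(the subtraction is exact for a polymatroid rank function). -/
def fdual (n : ℕ) (f : Finset (Fin n) → ℕ) : Finset (Fin n) → ℕ :=
  fun I => f (Finset.univ \ I) + (∑ i ∈ I, f {i}) - f Finset.univ

/-! Fix `m > f [n]` and give the coordinates of a vector `0 ≤ c ≤ m` independent geometric weights
with parameter `y`, truncated at `m`. The vectors dominating a basis split into orthants, one for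
each basis `a`: it consists of the `c` whose lexicographically least dominated basis is `a`, and its
free directions are the externally active indices of `a`. Hence these vectors have total weight
`(1 - y) ^ f [n] * X_P(y)`. A vector with at least `r_2(P)` coordinates below `m` has weight
divisible by `y ^ r_2(P)`. A vector with fewer such coordinates that dominates no basis vanishes on
exactly one cocircuit: the complement of the union of two such cocircuits has rank at least
`f [n] - 1`, so by submodularity the complement of their intersection has rank less than `f [n]`,
which contradicts minimality. Therefore
`(1 - y) ^ f [n] * X_P(y) ≡ 1 - ∑ J, y ^ |J| (mod y ^ r_2(P))`, with `J` running over the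
cocircuits.

If `f [n] = s + 2`, dividing by `(1 - y) ^ (s + 1)` expresses the differences of consecutive
coefficients of `X_P` through the numbers `C(s + i, s)`; as these are log-concave in `i`, a
difference that is nonpositive is followed by nonpositive ones. -/

section WeightedCounting

variable {ι R : Type*} [CommRing R]

/-- The geometric distribution with parameter `x`, truncated at `m`: an integer `0 ≤ z < m` has
weight `x (1 - x) ^ z`, and `m` carries the weight of all integers `z ≥ m`. -/
def truncGeom (x : R) (m z : ℤ) : R :=
  (1 - x) ^ z.toNat * if z < m then x else 1

lemma sum_Icc_truncGeom (x : R) {a m : ℤ} (ha : 0 ≤ a) (ham : a ≤ m) :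
    ∑ z ∈ Icc a m, truncGeom x m z = (1 - x) ^ a.toNat := by
  induction a, ham using Int.leInductionDown with
  | base => simp [truncGeom]
  | pred k hk ih =>
    have hk' : k.toNat = (k - 1).toNat + 1 := by omega
    rw [← insert_Icc_left_eq_Icc_sub_one (by omega), sum_insert (by simp), ih (by omega),
      truncGeom, if_pos (by omega), hk']
    ring

variable [Fintype ι]

/-- The weight of an integer vector whose coordinates are independent and follow `truncGeom`. -/
def truncGeomProd (x : R) (m : ℤ) (c : ι → ℤ) : R :=
  ∏ i, truncGeom x m (c i)

lemma pow_card_lt_dvd_truncGeomProd (x : R) (m : ℤ) (c : ι → ℤ) :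
    x ^ #{i | c i < m} ∣ truncGeomProd x m c := by
  simp only [truncGeomProd, truncGeom, prod_mul_distrib, prod_ite, prod_const, one_pow, mul_one]
  exact dvd_mul_left _ _

variable [DecidableEq ι]

/-- The vectors `c` with `a ≤ c ≤ m` that agree with `a` outside `S`. -/
noncomputable def truncOrthant (m : ℤ) (S : Finset ι) (a : ι → ℤ) : Finset (ι → ℤ) :=
  Icc a (S.piecewise (fun _ => m) a)

lemma mem_truncOrthant {m : ℤ} {S : Finset ι} {a c : ι → ℤ} (ham : ∀ i, a i ≤ m) :
    c ∈ truncOrthant m S a ↔ a ≤ c ∧ (∀ i, c i ≤ m) ∧ ∀ i ∉ S, c i = a i := by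
  simp only [truncOrthant, mem_Icc, Pi.le_def, Finset.piecewise, ← forall_and]
  refine forall_congr' fun i => ?_
  have := ham i
  by_cases hi : i ∈ S <;> simp only [hi, if_true, if_false] <;> grind

lemma sum_truncOrthant_truncGeomProd (x : R) {m : ℤ} {S : Finset ι} {a : ι → ℤ} (ha : 0 ≤ a)
    (haS : ∀ i ∈ S, a i ≤ m) (haSc : ∀ i ∉ S, a i < m) :
    ∑ c ∈ truncOrthant m S a, truncGeomProd x m c = (1 - x) ^ (∑ i, (a i).toNat) * x ^ #Sᶜ := by
  have hfactor (i : ι) : ∑ z ∈ Icc (a i) (S.piecewise (fun _ => m) a i), truncGeom x m z =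
      (1 - x) ^ (a i).toNat * if i ∈ Sᶜ then x else 1 := by
    by_cases hi : i ∈ S
    · simp [hi, sum_Icc_truncGeom x (ha i) (haS i hi)]
    · simp [hi, truncGeom, haSc i hi]
  calc ∑ c ∈ truncOrthant m S a, truncGeomProd x m c
      = ∏ i, ∑ z ∈ Icc (a i) (S.piecewise (fun _ => m) a i), truncGeom x m z := by
        rw [truncOrthant, Pi.Icc_eq, prod_univ_sum]; rfl
    _ = (1 - x) ^ (∑ i, (a i).toNat) * x ^ #Sᶜ := by
        simp only [hfactor, prod_mul_distrib, prod_pow_eq_pow_sum, prod_ite_mem, univ_inter,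
          prod_const]

lemma sum_box_truncGeomProd (x : R) {m : ℤ} (hm : 0 ≤ m) :
    ∑ c ∈ Icc (0 : ι → ℤ) (fun _ => m), truncGeomProd x m c = 1 := by
  simpa [truncOrthant, hm] using
    sum_truncOrthant_truncGeomProd x (m := m) (S := (univ : Finset ι)) (a := 0) le_rfl

lemma sum_box_vanishing_truncGeomProd (x : R) {m : ℤ} (hm : 0 < m) (J : Finset ι) :
    ∑ c ∈ Icc (0 : ι → ℤ) (fun _ => m) with ∀ i ∈ J, c i = 0, truncGeomProd x m c = x ^ #J := by
  have hJ : {c ∈ Icc (0 : ι → ℤ) (fun _ => m) | ∀ i ∈ J, c i = 0} = truncOrthant m Jᶜ 0 := by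
    ext c
    simp [mem_truncOrthant (a := (0 : ι → ℤ)) (fun _ => hm.le), Pi.le_def, and_assoc]
  simpa [hJ] using sum_truncOrthant_truncGeomProd x (S := Jᶜ) (a := 0) le_rfl
    (fun _ _ => hm.le) (fun _ _ => hm)

end WeightedCounting

section Bases

variable {n : ℕ} {f : Finset (Fin n) → ℕ} {a b c : Fin n → ℤ}

/-- A set is tight for a vector `a` if the rank inequality of `a` on it is an equality. -/
def IsTight (f : Finset (Fin n) → ℕ) (a : Fin n → ℤ) (T : Finset (Fin n)) : Prop :=
  ∑ i ∈ T, a i = f T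

/-- A vector is spanning if it dominates a basis. -/
def IsSpanning (f : Finset (Fin n) → ℕ) (c : Fin n → ℤ) : Prop :=
  ∃ a ∈ polyBases n f, a ≤ c

lemma mem_extAct_iff {i : Fin n} :
    i ∈ extAct n f a ↔ ∀ j < i, a + Pi.single i 1 - Pi.single j 1 ∉ polyBases n f := by
  have hmove (j : Fin n) : (fun t => a t + (if t = i then 1 else 0) - (if t = j then 1 else 0)) =
      a + Pi.single i 1 - Pi.single j 1 := by
    ext t; simp [Pi.single_apply]
  simp [extAct, hmove]

namespace IsPolymatroidRank

lemma apply_le_rank_univ (hf : IsPolymatroidRank n f)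
    (ha : ∀ I : Finset (Fin n), ∑ i ∈ I, a i ≤ f I) (i : Fin n) : a i ≤ f univ := by
  have hi : a i ≤ f {i} := by simpa using ha {i}
  exact hi.trans (by exact_mod_cast hf.2.1 {i} univ (subset_univ _))

lemma mem_polyBases (hf : IsPolymatroidRank n f) : a ∈ polyBases n f ↔
    0 ≤ a ∧ (∀ I : Finset (Fin n), ∑ i ∈ I, a i ≤ f I) ∧ ∑ i, a i = f univ := by
  rw [polyBases, mem_filter, mem_image]
  refine ⟨fun h => h.2, fun h => ⟨⟨fun i => ⟨(a i).toNat, ?_⟩, mem_univ _, ?_⟩, h⟩⟩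
  · have := hf.apply_le_rank_univ h.2.1 i
    omega
  · ext i
    exact Int.toNat_of_nonneg (h.1 i)

lemma isTight_union (hf : IsPolymatroidRank n f)
    (ha : ∀ I : Finset (Fin n), ∑ i ∈ I, a i ≤ f I) {S T : Finset (Fin n)}
    (hS : IsTight f a S) (hT : IsTight f a T) : IsTight f a (S ∪ T) := by
  have hsum := sum_union_inter (s₁ := S) (s₂ := T) (f := a)
  have hsubmod : (f (S ∪ T) + f (S ∩ T) : ℤ) ≤ f S + f T := by exact_mod_cast hf.2.2 S T
  unfold IsTight at *
  linarith [ha (S ∪ T), ha (S ∩ T)]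

lemma exists_isTight_superset (hf : IsPolymatroidRank n f)
    (ha : ∀ I : Finset (Fin n), ∑ i ∈ I, a i ≤ f I) {U S : Finset (Fin n)}
    (h : ∀ i ∈ S, ∃ T, i ∈ T ∧ Disjoint T U ∧ IsTight f a T) :
    ∃ T, S ⊆ T ∧ Disjoint T U ∧ IsTight f a T := by
  induction S using Finset.induction_on with
  | empty => exact ⟨∅, by simp, by simp, by simp [IsTight, hf.1]⟩
  | insert i S _ ih =>
    obtain ⟨T, hST, hTU, hT⟩ := ih fun j hj => h j (mem_insert_of_mem hj)
    obtain ⟨V, hiV, hVU, hV⟩ := h i (mem_insert_self _ _)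
    exact ⟨V ∪ T, insert_subset (mem_union_left _ hiV) (hST.trans subset_union_right),
      disjoint_union_left.2 ⟨hVU, hTU⟩, hf.isTight_union ha hV hT⟩

lemma add_single_sub_single_mem_polyBases (hf : IsPolymatroidRank n f) (ha : a ∈ polyBases n f)
    {i j : Fin n} (hj : 0 < a j) (hT : ∀ T, i ∈ T → j ∉ T → ¬ IsTight f a T) :
    a + Pi.single i 1 - Pi.single j 1 ∈ polyBases n f := by
  rw [hf.mem_polyBases] at ha ⊢
  obtain ⟨ha0, haf, hasum⟩ := ha
  refine ⟨fun t => ?_, fun I => ?_, ?_⟩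
  · have := ha0 t
    simp only [Pi.zero_apply, Pi.add_apply, Pi.sub_apply, Pi.single_apply] at this ⊢
    grind
  · have hI := haf I
    have hstrict (hi : i ∈ I) (hj : j ∉ I) := lt_of_le_of_ne hI (hT I hi hj)
    simp only [Pi.add_apply, Pi.sub_apply, sum_sub_distrib, sum_add_distrib, sum_pi_single']
    grind
  · simp [sum_add_distrib, hasum]

lemma exists_add_single_sub_single_mem_polyBases (hf : IsPolymatroidRank n f)
    (ha : a ∈ polyBases n f) (hb : b ∈ polyBases n f) {j : Fin n} (hj : b j < a j) :
    ∃ i, a i < b i ∧ a + Pi.single i 1 - Pi.single j 1 ∈ polyBases n f := by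
  by_contra! hcon
  obtain ⟨-, haf, hasum⟩ := hf.mem_polyBases.1 ha
  obtain ⟨hb0, hbf, hbsum⟩ := hf.mem_polyBases.1 hb
  have htight (i : Fin n) (hi : i ∈ ({i | a i < b i} : Finset (Fin n))) :
      ∃ T, i ∈ T ∧ Disjoint T {j} ∧ IsTight f a T := by
    by_contra! hT
    exact hcon i (by simpa using hi) <| hf.add_single_sub_single_mem_polyBases ha
      ((hb0 j).trans_lt hj) fun T hiT hjT => hT T hiT (by simpa using hjT)
  obtain ⟨T, hsub, hjT, hT⟩ := hf.exists_isTight_superset haf htight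
  have hlt : ∑ i ∈ Tᶜ, b i < ∑ i ∈ Tᶜ, a i := by
    refine sum_lt_sum (fun i hi => ?_) ⟨j, by simpa using hjT, hj⟩
    by_contra! hab
    exact mem_compl.1 hi (hsub (by simpa using hab))
  have hsplit_a := sum_add_sum_compl T a
  have hsplit_b := sum_add_sum_compl T b
  unfold IsTight at hT
  linarith [hbf T]

lemma isSpanning_of_forall_le_sum (hf : IsPolymatroidRank n f) (hc : 0 ≤ c)
    (h : ∀ J : Finset (Fin n), (f univ : ℤ) - f Jᶜ ≤ ∑ i ∈ J, c i) : IsSpanning f c := by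
  obtain ⟨a, ha⟩ := exists_maximal
    (s := {a ∈ Icc 0 c | ∀ I : Finset (Fin n), ∑ i ∈ I, a i ≤ (f I : ℤ)}) ⟨0, by simp [hc]⟩
  obtain ⟨⟨ha0, hac⟩, haf⟩ : (0 ≤ a ∧ a ≤ c) ∧ ∀ I, ∑ i ∈ I, a i ≤ (f I : ℤ) := by
    simpa using ha.prop
  have htight (i : Fin n) (hi : i ∈ ({i | a i < c i} : Finset (Fin n))) :
      ∃ T, i ∈ T ∧ Disjoint T ∅ ∧ IsTight f a T := by
    by_contra! hT
    have hlt : a < a + Pi.single i 1 := by simp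
    refine ha.not_gt ?_ hlt
    simp only [mem_filter, mem_Icc, Pi.le_def, mem_univ, true_and] at hi ⊢
    refine ⟨⟨ha0.trans hlt.le, fun t => ?_⟩, fun I => ?_⟩
    · have := hac t
      simp only [Pi.add_apply, Pi.single_apply]
      grind
    · have hstrict (hiI : i ∈ I) := lt_of_le_of_ne (haf I) (hT I hiI (by simp))
      simp only [Pi.add_apply, sum_add_distrib, sum_pi_single']
      grind
  obtain ⟨T, hsub, -, hT⟩ := hf.exists_isTight_superset haf htight
  have hle : ∑ i ∈ Tᶜ, c i ≤ ∑ i ∈ Tᶜ, a i := by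
    refine sum_le_sum fun i hi => ?_
    by_contra! hac
    exact mem_compl.1 hi (hsub (by simpa using hac))
  refine ⟨a, hf.mem_polyBases.2 ⟨ha0, haf, le_antisymm (haf univ) ?_⟩, hac⟩
  have hT' := h Tᶜ
  rw [compl_compl] at hT'
  unfold IsTight at hT
  linarith [sum_add_sum_compl T a]

end IsPolymatroidRank

end Bases

section CanonicalDecomposition

variable {n : ℕ} {f : Finset (Fin n) → ℕ} {a b c : Fin n → ℤ} {m : ℤ}

lemma toLex_add_single_sub_single_lt (a : Fin n → ℤ) {i j : Fin n} (hji : j < i) :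
    toLex (a + Pi.single i 1 - Pi.single j 1) < toLex a :=
  ⟨j, fun k hk => by simp [hk.ne, (hk.trans hji).ne], by simp [hji.ne]⟩

namespace IsPolymatroidRank

lemma toLex_le_of_mem_truncOrthant_extAct (hf : IsPolymatroidRank n f) (hm : f univ ≤ m)
    (ha : a ∈ polyBases n f) (hb : b ∈ polyBases n f) (hca : c ∈ truncOrthant m (extAct n f a) a)
    (hbc : b ≤ c) : toLex a ≤ toLex b := by
  rw [mem_truncOrthant fun i => (hf.apply_le_rank_univ (hf.mem_polyBases.1 ha).2.1 i).trans hm]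
    at hca
  by_contra! hlt
  obtain ⟨j, heq : ∀ i < j, b i = a i, hj : b j < a j⟩ := hlt
  obtain ⟨i, hi, hmem⟩ := hf.exists_add_single_sub_single_mem_polyBases ha hb hj
  have hji : j < i := by
    by_contra! hij
    rcases hij.lt_or_eq with hij | rfl
    · exact hi.ne' (heq i hij)
    · exact hi.not_gt hj
  have hext : i ∉ extAct n f a := fun h => mem_extAct_iff.1 h j hji hmem
  exact (hi.trans_le (hbc i)).ne' (hca.2.2 i hext)

lemma mem_truncOrthant_extAct_of_forall_toLex_le (hf : IsPolymatroidRank n f) (hm : f univ ≤ m)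
    (ha : a ∈ polyBases n f) (hac : a ≤ c) (hcm : ∀ i, c i ≤ m)
    (hmin : ∀ b ∈ polyBases n f, b ≤ c → toLex a ≤ toLex b) :
    c ∈ truncOrthant m (extAct n f a) a := by
  rw [mem_truncOrthant fun i => (hf.apply_le_rank_univ (hf.mem_polyBases.1 ha).2.1 i).trans hm]
  refine ⟨hac, hcm, fun i hi => ?_⟩
  by_contra hne
  obtain ⟨j, hji, hmem⟩ : ∃ j < i, a + Pi.single i 1 - Pi.single j 1 ∈ polyBases n f := by
    simpa [mem_extAct_iff] using hi
  refine (toLex_add_single_sub_single_lt a hji).not_ge (hmin _ hmem fun t => ?_)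
  have := hac t
  simp only [Pi.add_apply, Pi.sub_apply, Pi.single_apply]
  grind

open Classical in
lemma biUnion_truncOrthant_extAct (hf : IsPolymatroidRank n f) (hm : f univ ≤ m) :
    (polyBases n f).biUnion (fun a => truncOrthant m (extAct n f a) a) =
      {c ∈ Icc (0 : Fin n → ℤ) (fun _ => m) | IsSpanning f c} := by
  ext c
  simp only [mem_biUnion, mem_filter, mem_Icc]
  constructor
  · rintro ⟨a, ha, hca⟩
    obtain ⟨ha0, haf, -⟩ := hf.mem_polyBases.1 ha
    rw [mem_truncOrthant fun i => (hf.apply_le_rank_univ haf i).trans hm] at hca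
    exact ⟨⟨ha0.trans hca.1, hca.2.1⟩, a, ha, hca.1⟩
  · rintro ⟨⟨-, hcm⟩, a₀, ha₀, ha₀c⟩
    obtain ⟨a, ha, hmin⟩ := exists_min_image {a ∈ polyBases n f | a ≤ c} toLex
      ⟨a₀, mem_filter.2 ⟨ha₀, ha₀c⟩⟩
    simp only [mem_filter, and_imp] at ha hmin
    exact ⟨a, ha.1, hf.mem_truncOrthant_extAct_of_forall_toLex_le hm ha.1 ha.2 hcm hmin⟩

lemma pairwiseDisjoint_truncOrthant_extAct (hf : IsPolymatroidRank n f) (hm : f univ ≤ m) :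
    (polyBases n f : Set (Fin n → ℤ)).PairwiseDisjoint
      fun a => truncOrthant m (extAct n f a) a := by
  intro a ha b hb hab
  refine disjoint_left.2 fun c hca hcb => hab (toLex_inj.1 ?_)
  exact (hf.toLex_le_of_mem_truncOrthant_extAct hm ha hb hca (mem_Icc.1 hcb).1).antisymm
    (hf.toLex_le_of_mem_truncOrthant_extAct hm hb ha hcb (mem_Icc.1 hca).1)

lemma sum_truncOrthant_extAct {R : Type*} [CommRing R] (hf : IsPolymatroidRank n f)
    (hm : f univ < m) (ha : a ∈ polyBases n f) (x : R) :
    ∑ c ∈ truncOrthant m (extAct n f a) a, truncGeomProd x m c =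
      (1 - x) ^ f univ * x ^ (n - #(extAct n f a)) := by
  obtain ⟨ha0, haf, hasum⟩ := hf.mem_polyBases.1 ha
  have ham (i : Fin n) : a i < m := (hf.apply_le_rank_univ haf i).trans_lt hm
  have htotal : ∑ i, (a i).toNat = f univ := by
    zify
    rw [← hasum]
    exact sum_congr rfl fun i _ => Int.toNat_of_nonneg (ha0 i)
  rw [sum_truncOrthant_truncGeomProd x ha0 (fun i _ => (ham i).le) (fun i _ => ham i), htotal,
    card_compl, Fintype.card_fin]

open Classical in
lemma one_sub_pow_mul_exteriorPoly (hf : IsPolymatroidRank n f) (hm : f univ < m) :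
    (1 - X) ^ f univ * exteriorPoly n f =
      ∑ c ∈ Icc 0 (fun _ => m) with IsSpanning f c, truncGeomProd X m c := by
  rw [← hf.biUnion_truncOrthant_extAct hm.le,
    sum_biUnion (hf.pairwiseDisjoint_truncOrthant_extAct hm.le), exteriorPoly, mul_sum]
  exact sum_congr rfl fun a ha => (hf.sum_truncOrthant_extAct hm ha X).symm

end IsPolymatroidRank

end CanonicalDecomposition

section Cocircuits

variable {n : ℕ} {f : Finset (Fin n) → ℕ} {c : Fin n → ℤ} {m : ℤ}

/-- A cocircuit of the polymatroid with rank function `f`: an inclusion-minimal set whose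
complement does not have full rank. -/
def IsCocircuit (f : Finset (Fin n) → ℕ) (J : Finset (Fin n)) : Prop :=
  Minimal (fun K => f Kᶜ < f univ) J

open Classical in
lemma sum_isCocircuit_pow_card {R : Type*} [CommRing R] (f : Finset (Fin n) → ℕ) (x : R)
    (hm : 0 < m) :
    ∑ J with IsCocircuit f J, x ^ #J = ∑ c ∈ Icc (0 : Fin n → ℤ) (fun _ => m),
      #{J | IsCocircuit f J ∧ ∀ i ∈ J, c i = 0} • truncGeomProd x m c := by
  simp only [← sum_box_vanishing_truncGeomProd x hm, ← sum_const]
  exact sum_comm' (by simp; tauto)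

lemma le_rank_univ_of_rk_pos {k : ℕ} (hk : 0 < rk n f k) : k ≤ f univ := by
  obtain ⟨_, F, hF, -⟩ := Nat.nonempty_of_pos_sInf hk
  omega

lemma rank_univ_lt_of_card_lt_rk {k : ℕ} {J : Finset (Fin n)} (hJ : #J < rk n f k) :
    f univ < f Jᶜ + k := by
  by_contra! hle
  have hrk : rk n f k ≤ n - #Jᶜ := Nat.sInf_le ⟨Jᶜ, by omega, rfl⟩
  have hcard := card_add_card_compl J
  rw [Fintype.card_fin] at hcard
  omega

namespace IsPolymatroidRank

lemma not_isSpanning_of_isCocircuit (hf : IsPolymatroidRank n f) {J : Finset (Fin n)}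
    (hJ : IsCocircuit f J) (hcJ : ∀ i ∈ J, c i = 0) : ¬ IsSpanning f c := by
  rintro ⟨a, ha, hac⟩
  obtain ⟨-, haf, hasum⟩ := hf.mem_polyBases.1 ha
  have hle : ∑ i ∈ J, a i ≤ 0 := sum_nonpos fun i hi => (hac i).trans (hcJ i hi).le
  have hlt : (f Jᶜ : ℤ) < f univ := by exact_mod_cast hJ.prop
  linarith [sum_add_sum_compl J a, haf Jᶜ]

lemma isCocircuit_unique (hf : IsPolymatroidRank n f) {J K : Finset (Fin n)}
    (hJ : IsCocircuit f J) (hK : IsCocircuit f K) (hJK : #(J ∪ K) < rk n f 2) : J = K := by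
  have hunion := rank_univ_lt_of_card_lt_rk hJK
  have hsubmod := hf.2.2 Jᶜ Kᶜ
  rw [← compl_inter, ← compl_union] at hsubmod
  have hinter : f (J ∩ K)ᶜ < f univ := by
    have := hJ.prop
    have := hK.prop
    omega
  exact (hJ.eq_of_le hinter inter_subset_left).symm.trans (hK.eq_of_le hinter inter_subset_right)

lemma exists_isCocircuit_of_not_isSpanning (hf : IsPolymatroidRank n f) (hm : f univ ≤ m)
    (hc : 0 ≤ c) (hsmall : #{i | c i < m} < rk n f 2) (h : ¬ IsSpanning f c) :
    ∃ J, IsCocircuit f J ∧ ∀ i ∈ J, c i = 0 := by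
  obtain ⟨J, hJ⟩ : ∃ J : Finset (Fin n), ∑ i ∈ J, c i < (f univ : ℤ) - f Jᶜ := by
    by_contra! hall
    exact h (hf.isSpanning_of_forall_le_sum hc hall)
  have hle (i : Fin n) (hi : i ∈ J) : c i ≤ ∑ i ∈ J, c i :=
    single_le_sum (f := c) (fun i _ => hc i) hi
  have hJm : J ⊆ ({i | c i < m} : Finset (Fin n)) := fun i hi => by
    have := hle i hi
    simp only [mem_filter, mem_univ, true_and]
    omega
  have hcorank := rank_univ_lt_of_card_lt_rk ((card_le_card hJm).trans_lt hsmall)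
  have hzero (i : Fin n) (hi : i ∈ J) : c i = 0 := by
    have := hle i hi
    have := hc i
    simp only [Pi.zero_apply] at this
    omega
  have hrank : f Jᶜ < f univ := by
    rw [sum_eq_zero hzero] at hJ
    omega
  obtain ⟨K, hKJ, hK⟩ := exists_minimal_le_of_wellFoundedLT (fun K => f Kᶜ < f univ) J hrank
  exact ⟨K, hK, fun i hi => hzero i (hKJ hi)⟩

open Classical in
lemma card_isCocircuit_vanishing (hf : IsPolymatroidRank n f) (hm : f univ < m)
    (hc : 0 ≤ c) (hsmall : #{i | c i < m} < rk n f 2) :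
    #{J | IsCocircuit f J ∧ ∀ i ∈ J, c i = 0} =
      if IsSpanning f c then 0 else 1 := by
  split_ifs with hspan
  · rw [card_eq_zero, filter_eq_empty_iff]
    exact fun J _ hJ => hf.not_isSpanning_of_isCocircuit hJ.1 hJ.2 hspan
  · obtain ⟨J, hJ, hJc⟩ := hf.exists_isCocircuit_of_not_isSpanning hm.le hc hsmall hspan
    refine card_eq_one.2 ⟨J, eq_singleton_iff_unique_mem.2
      ⟨mem_filter.2 ⟨mem_univ _, hJ, hJc⟩, fun K hK => ?_⟩⟩
    obtain ⟨hK, hKc⟩ : IsCocircuit f K ∧ ∀ i ∈ K, c i = 0 := by simpa using hK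
    refine hf.isCocircuit_unique hK hJ ((card_le_card fun i hi => ?_).trans_lt hsmall)
    have : c i = 0 := (mem_union.1 hi).elim (hKc i) (hJc i)
    simp only [mem_filter, mem_univ, true_and]
    omega

open Classical in
lemma X_pow_rk_two_dvd_one_sub_pow_mul_exteriorPoly_sub (hf : IsPolymatroidRank n f) :
    (X : ℤ[X]) ^ rk n f 2 ∣
      (1 - X) ^ f univ * exteriorPoly n f - (1 - ∑ J with IsCocircuit f J, X ^ #J) := by
  obtain ⟨m, hm⟩ : ∃ m : ℤ, f univ < m := exists_gt _
  rw [hf.one_sub_pow_mul_exteriorPoly hm, sum_isCocircuit_pow_card f X (m := m) (by omega),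
    ← sum_box_truncGeomProd (ι := Fin n) (X : ℤ[X]) (m := m) (by omega), sum_filter,
    ← sum_sub_distrib, ← sum_sub_distrib]
  refine dvd_sum fun c hc => ?_
  by_cases hsmall : #{i | c i < m} < rk n f 2
  · rw [hf.card_isCocircuit_vanishing hm (mem_Icc.1 hc).1 hsmall]
    split_ifs <;> simp
  · have hdvd : (X : ℤ[X]) ^ rk n f 2 ∣ truncGeomProd X m c :=
      (pow_dvd_pow X (not_lt.1 hsmall)).trans (pow_card_lt_dvd_truncGeomProd X m c)
    refine dvd_sub ?_ (dvd_sub hdvd (dvd_nsmul_of_dvd _ hdvd))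
    split_ifs
    exacts [hdvd, dvd_zero _]

end IsPolymatroidRank

end Cocircuits

section DescentPropagation

lemma exists_unimodal_index {α : Type*} [LinearOrder α] {u : ℕ → α} {r : ℕ}
    (h : ∀ i, i + 2 < r → u (i + 1) ≤ u i → u (i + 2) ≤ u (i + 1)) :
    ∃ k, (∀ i < k, i + 1 < r → u i ≤ u (i + 1)) ∧ ∀ i, k ≤ i → i + 1 < r → u (i + 1) ≤ u i := by
  have hex : ∃ k, k + 1 < r → u (k + 1) ≤ u k := ⟨r, fun hr => by omega⟩
  refine ⟨Nat.find hex, fun i hi _ => ?_, fun i hi => ?_⟩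
  · exact (not_le.1 (Classical.not_imp.1 (Nat.find_min hex hi)).2).le
  · induction i, hi using Nat.le_induction with
    | base => exact Nat.find_spec hex
    | succ i _ ih => exact fun hr => h i hr (ih (by omega))

lemma choose_add_logConcave (s : ℕ) {k i : ℕ} (hki : k ≤ i) :
    (s + k).choose s * (s + (i + 1)).choose s ≤ (s + (k + 1)).choose s * (s + i).choose s := by
  have hsucc (j : ℕ) : (j + 1) * (s + (j + 1)).choose s = (s + j + 1) * (s + j).choose s := by
    have h := Nat.add_one_mul_choose_eq (s + j) j
    rw [← Nat.choose_symm_add, add_assoc s j 1, ← Nat.choose_symm_add] at h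
    linarith
  refine le_of_mul_le_mul_left ?_ (show 0 < (k + 1) * (i + 1) by positivity)
  calc (k + 1) * (i + 1) * ((s + k).choose s * (s + (i + 1)).choose s)
      = (k + 1) * (s + k).choose s * ((i + 1) * (s + (i + 1)).choose s) := by ring
    _ = (k + 1) * (s + i + 1) * ((s + k).choose s * (s + i).choose s) := by rw [hsucc]; ring
    _ ≤ (s + k + 1) * (i + 1) * ((s + k).choose s * (s + i).choose s) := by
        gcongr ?_ * _
        have : s * k ≤ s * i := Nat.mul_le_mul_left s hki
        linarith
    _ = ((k + 1) * (s + (k + 1)).choose s) * ((i + 1) * (s + i).choose s) := by rw [hsucc]; ring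
    _ = (k + 1) * (i + 1) * ((s + (k + 1)).choose s * (s + i).choose s) := by ring

lemma coeff_mul_one_sub_succ_nonpos {R : Type*} [CommRing R] [LinearOrder R] [IsStrictOrderedRing R]
    {v q : PowerSeries R} (hpos : ∀ i, 0 < PowerSeries.coeff i v)
    (hv : ∀ k i, k ≤ i → PowerSeries.coeff k v * PowerSeries.coeff (i + 1) v ≤
      PowerSeries.coeff (k + 1) v * PowerSeries.coeff i v)
    (hq : ∀ i, 0 ≤ PowerSeries.coeff i q) {i : ℕ} (h : PowerSeries.coeff i (v * (1 - q)) ≤ 0) :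
    PowerSeries.coeff (i + 1) (v * (1 - q)) ≤ 0 := by
  have hmono : PowerSeries.coeff i (v * q) * PowerSeries.coeff (i + 1) v ≤
      PowerSeries.coeff (i + 1) (v * q) * PowerSeries.coeff i v := by
    rw [PowerSeries.coeff_mul, PowerSeries.coeff_mul, Finset.Nat.sum_antidiagonal_succ, add_mul,
      sum_mul, sum_mul]
    refine le_add_of_nonneg_of_le (mul_nonneg (mul_nonneg (hpos _).le (hq _)) (hpos _).le)
      (sum_le_sum fun p hp => ?_)
    have := mul_le_mul_of_nonneg_right (hv p.1 i (Nat.le.intro (mem_antidiagonal.1 hp))) (hq p.2)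
    linarith
  rw [mul_sub, mul_one, map_sub, sub_nonpos] at h ⊢
  refine le_of_mul_le_mul_right ?_ (hpos i)
  calc PowerSeries.coeff (i + 1) v * PowerSeries.coeff i v
      = PowerSeries.coeff i v * PowerSeries.coeff (i + 1) v := mul_comm _ _
    _ ≤ PowerSeries.coeff i (v * q) * PowerSeries.coeff (i + 1) v :=
        mul_le_mul_of_nonneg_right h (hpos _).le
    _ ≤ PowerSeries.coeff (i + 1) (v * q) * PowerSeries.coeff i v := hmono

lemma coeff_eq_coeff_invOneSubPow_mul {R : Type*} [CommRing R] {p q : PowerSeries R} {d r i : ℕ}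
    (h : PowerSeries.X ^ r ∣ (1 - PowerSeries.X) ^ d * p - q) (hi : i < r) :
    PowerSeries.coeff i p = PowerSeries.coeff i ((PowerSeries.invOneSubPow R d).val * q) := by
  have hunit : (PowerSeries.invOneSubPow R d).val * (1 - PowerSeries.X) ^ d = 1 := by
    rw [← PowerSeries.invOneSubPow_inv_eq_one_sub_pow, Units.val_inv]
  have hdvd : PowerSeries.X ^ r ∣ p - (PowerSeries.invOneSubPow R d).val * q := by
    have := h.mul_left (PowerSeries.invOneSubPow R d).val
    rwa [mul_sub, ← mul_assoc, hunit, one_mul] at this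
  rw [← sub_eq_zero, ← map_sub]
  exact PowerSeries.X_pow_dvd_iff.1 hdvd i hi

variable {n : ℕ} {f : Finset (Fin n) → ℕ}

namespace IsPolymatroidRank

open Classical in
lemma coeff_exteriorPoly_succ_sub (hf : IsPolymatroidRank n f) {s i : ℕ} (hs : f univ = s + 1)
    (hi : i + 1 < rk n f 2) :
    (exteriorPoly n f).coeff (i + 1) - (exteriorPoly n f).coeff i =
      PowerSeries.coeff (i + 1) ((PowerSeries.invOneSubPow ℤ s).val *
        (1 - ∑ J with IsCocircuit f J, PowerSeries.X ^ #J)) := by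
  have hdvd : (PowerSeries.X : PowerSeries ℤ) ^ rk n f 2 ∣
      (1 - PowerSeries.X) ^ s * ((1 - PowerSeries.X) * (exteriorPoly n f : PowerSeries ℤ)) -
        (1 - ∑ J with IsCocircuit f J, PowerSeries.X ^ #J) := by
    have h := map_dvd (coeToPowerSeries.ringHom (R := ℤ))
      hf.X_pow_rk_two_dvd_one_sub_pow_mul_exteriorPoly_sub
    simp only [map_sub, map_mul, map_pow, map_one, map_sum, coeToPowerSeries.ringHom_apply,
      Polynomial.coe_X] at h
    rwa [hs, pow_succ, mul_assoc] at h
  rw [← coeff_eq_coeff_invOneSubPow_mul hdvd hi, sub_mul, one_mul, map_sub,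
    PowerSeries.coeff_succ_X_mul, Polynomial.coeff_coe, Polynomial.coeff_coe]

lemma coeff_exteriorPoly_descent (hf : IsPolymatroidRank n f) {i : ℕ} (hi : i + 2 < rk n f 2)
    (h : (exteriorPoly n f).coeff (i + 1) ≤ (exteriorPoly n f).coeff i) :
    (exteriorPoly n f).coeff (i + 2) ≤ (exteriorPoly n f).coeff (i + 1) := by
  classical
  obtain ⟨s, hs⟩ : ∃ s, f univ = s + 1 + 1 :=
    ⟨f univ - 2, by have := le_rank_univ_of_rk_pos (Nat.zero_lt_of_lt hi); omega⟩
  rw [← sub_nonpos, hf.coeff_exteriorPoly_succ_sub hs (by omega)] at h ⊢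
  have hcoeff (k : ℕ) :
      PowerSeries.coeff k (PowerSeries.invOneSubPow ℤ (s + 1)).val = ((s + k).choose s : ℤ) := by
    rw [PowerSeries.invOneSubPow_val_succ_eq_mk_add_choose, PowerSeries.coeff_mk]
  refine coeff_mul_one_sub_succ_nonpos (fun k => ?_) (fun k j hkj => ?_) (fun k => ?_) h
  · rw [hcoeff]
    exact_mod_cast Nat.choose_pos (Nat.le_add_right s k)
  · simp only [hcoeff]
    exact_mod_cast choose_add_logConcave s hkj
  · simp only [map_sum, PowerSeries.coeff_X_pow]
    positivity

end IsPolymatroidRank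

end DescentPropagation

/-- The sequence `[y^0]X_P(y), …, [y^{r_2(P)-1}]X_P(y)` is unimodal. -/
theorem stmt16 (n : ℕ) (f : Finset (Fin n) → ℕ) (hf : IsPolymatroidRank n f) :
    ∃ k : ℕ,
      (∀ i : ℕ, i < k → i + 1 ≤ rk n f 2 - 1 →
        (exteriorPoly n f).coeff i ≤ (exteriorPoly n f).coeff (i + 1)) ∧
      (∀ i : ℕ, k < i → i + 1 ≤ rk n f 2 - 1 →
        (exteriorPoly n f).coeff (i + 1) ≤ (exteriorPoly n f).coeff i) := by
  obtain ⟨k, hasc, hdesc⟩ := exists_unimodal_index fun i => hf.coeff_exteriorPoly_descent (i := i)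
  exact ⟨k, fun i hik hi => hasc i hik (by omega), fun i hki hi => hdesc i hki.le (by omega)⟩
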